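/- Let ν ≥ 2 be an integer and a, b ≥ 0 with (a,b) ≠ (0,0). The equation aν/Ω − bΩ/(ν−1) = a − b has exactly one solution Ω > 0, namely Ω = (ν−1)(1 + ((a+b)/(2b))(√(1 + 4ab/((ν−1)(a+b)²)) − 1)) if a,b > 0; Ω = ν−1 if a = 0, b > 0; and Ω = ν if b = 0, a > 0. -/

import Mathlib

/-!
The left-hand side `a n / x - b x / (n - 1)` is strictly decreasing in `x > 0`, so there is at most
one positive solution. Substituting `x = n - 1 + t` turns the equation into
`(b / (n - 1)) t² + (a + b) t = a`. Its non-negative root, written with the square root in the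
denominator, makes sense also when `b = 0`, so the three cases of the formula need no separate
treatment for existence.
-/

open Real

/-- The value `Ω_il` for the inverse-linear loss. -/
noncomputable def OmegaIL (ν : ℕ) (a b : ℝ) : ℝ :=
  if 0 < a ∧ 0 < b then
    ((ν : ℝ) - 1) *
      (1 + (a + b) / (2 * b) *
        (Real.sqrt (1 + 4 * a * b / (((ν : ℝ) - 1) * (a + b) ^ 2)) - 1))
  else if a = 0 then (ν : ℝ) - 1
  else (ν : ℝ)

theorem strictAntiOn_div_sub_mul {K : Type*} [Field K] [LinearOrder K] [IsStrictOrderedRing K]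
    {p q : K} (hp : 0 ≤ p) (hq : 0 ≤ q) (hpq : p ≠ 0 ∨ q ≠ 0) :
    StrictAntiOn (fun x ↦ p / x - q * x) (Set.Ioi 0) := by
  intro x (hx : 0 < x) y _ hxy
  rcases hpq with hp' | hq'
  · have hdiv : p / y < p / x := div_lt_div_of_pos_left (hp.lt_of_ne' hp') hx hxy
    have hmul : q * x ≤ q * y := mul_le_mul_of_nonneg_left hxy.le hq
    linarith
  · have hdiv : p / y ≤ p / x := div_le_div_of_nonneg_left hp hx hxy.le
    have hmul : q * x < q * y := mul_lt_mul_of_pos_left hxy (hq.lt_of_ne' hq')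
    linarith

theorem div_sub_div_eq_sub_iff_quadratic {K : Type*} [Field K] {n a b t : K} (hn : n - 1 ≠ 0)
    (ht : n - 1 + t ≠ 0) :
    a * n / (n - 1 + t) - b * (n - 1 + t) / (n - 1) = a - b ↔
      b / (n - 1) * t ^ 2 + (a + b) * t = a := by
  rw [div_sub_div _ _ ht hn, div_eq_iff (mul_ne_zero ht hn), div_mul_eq_mul_div,
    div_add' _ _ _ hn, div_eq_iff hn]
  constructor <;> intro h <;> linear_combination -h

/-- The root of `q t² + p t = r` given by the quadratic formula with rationalized numerator. For
`0 < p` it covers the linear case `q = 0` as well, where the usual formula divides by zero. -/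
noncomputable def rationalizedRoot (p q r : ℝ) : ℝ :=
  2 * r / (p + √(p ^ 2 + 4 * q * r))

section rationalizedRoot

variable {p q r : ℝ}

theorem rationalizedRoot_nonneg (hp : 0 ≤ p) (hr : 0 ≤ r) : 0 ≤ rationalizedRoot p q r := by
  unfold rationalizedRoot
  positivity

theorem rationalizedRoot_isRoot (hp : 0 < p) (hdisc : 0 ≤ p ^ 2 + 4 * q * r) :
    q * rationalizedRoot p q r ^ 2 + p * rationalizedRoot p q r = r := by
  have hsq : √(p ^ 2 + 4 * q * r) ^ 2 = p ^ 2 + 4 * q * r := sq_sqrt hdisc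
  have hden : p + √(p ^ 2 + 4 * q * r) ≠ 0 := by positivity
  rw [rationalizedRoot]
  generalize √(p ^ 2 + 4 * q * r) = s at hsq hden ⊢
  field_simp
  linear_combination -r * hsq

theorem rationalizedRoot_eq_div (hp : 0 < p) (hq : q ≠ 0) (hdisc : 0 ≤ p ^ 2 + 4 * q * r) :
    rationalizedRoot p q r = (√(p ^ 2 + 4 * q * r) - p) / (2 * q) := by
  have hsq : √(p ^ 2 + 4 * q * r) ^ 2 = p ^ 2 + 4 * q * r := sq_sqrt hdisc
  have hden : p + √(p ^ 2 + 4 * q * r) ≠ 0 := by positivity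
  rw [rationalizedRoot, div_eq_div_iff hden (mul_ne_zero two_ne_zero hq)]
  linear_combination -hsq

theorem rationalizedRoot_zero_right : rationalizedRoot p q 0 = 0 := by
  simp [rationalizedRoot]

theorem rationalizedRoot_zero_middle (hp : 0 < p) : rationalizedRoot p 0 r = r / p := by
  rw [rationalizedRoot, mul_zero, zero_mul, add_zero, sqrt_sq hp.le, ← two_mul,
    mul_div_mul_left _ _ two_ne_zero]

end rationalizedRoot

/-- The value `Ω_il` for a real parameter `n` in place of the integer `ν`, by a single formula that
agrees with `OmegaIL` in all three of its cases. -/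
noncomputable def realOmegaIL (n a b : ℝ) : ℝ :=
  n - 1 + rationalizedRoot (a + b) (b / (n - 1)) a

theorem realOmegaIL_eq_of_pos {n a b : ℝ} (hn : 1 < n) (ha : 0 < a) (hb : 0 < b) :
    realOmegaIL n a b =
      (n - 1) * (1 + (a + b) / (2 * b) * (√(1 + 4 * a * b / ((n - 1) * (a + b) ^ 2)) - 1)) := by
  have hn' : 0 < n - 1 := sub_pos.2 hn
  have hsqrt : √((a + b) ^ 2 + 4 * (b / (n - 1)) * a) =
      (a + b) * √(1 + 4 * a * b / ((n - 1) * (a + b) ^ 2)) := by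
    rw [← sqrt_sq (add_pos ha hb).le, ← sqrt_mul (sq_nonneg _), sqrt_sq (add_pos ha hb).le]
    congr 1
    field_simp
  rw [realOmegaIL, rationalizedRoot_eq_div (by positivity) (by positivity) (by positivity), hsqrt]
  field_simp

theorem OmegaIL_eq_realOmegaIL {ν : ℕ} {a b : ℝ} (hν : 1 < (ν : ℝ)) (ha : 0 ≤ a) (hb : 0 ≤ b) :
    OmegaIL ν a b = realOmegaIL ν a b := by
  unfold OmegaIL
  split_ifs with hpos ha₀
  · exact (realOmegaIL_eq_of_pos hν hpos.1 hpos.2).symm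
  · rw [realOmegaIL, ha₀, rationalizedRoot_zero_right, add_zero]
  · have ha' : 0 < a := ha.lt_of_ne' ha₀
    obtain rfl : b = 0 := hb.eq_of_not_lt' fun hb' ↦ hpos ⟨ha', hb'⟩
    rw [realOmegaIL, add_zero, zero_div, rationalizedRoot_zero_middle ha', div_self ha₀,
      sub_add_cancel]

theorem stmt3_general (n : ℝ) (hn : 1 < n) (a b : ℝ) (ha : 0 ≤ a) (hb : 0 ≤ b)
    (hab : (a, b) ≠ (0, 0)) :
    0 < realOmegaIL n a b ∧
      a * n / realOmegaIL n a b - b * realOmegaIL n a b / (n - 1) = a - b ∧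
      ∀ Ω : ℝ, 0 < Ω → a * n / Ω - b * Ω / (n - 1) = a - b → Ω = realOmegaIL n a b := by
  have hn₁ : 0 < n - 1 := sub_pos.2 hn
  have hn₀ : n ≠ 0 := (one_pos.trans hn).ne'
  have hne : a ≠ 0 ∨ b ≠ 0 := by
    simpa only [ne_eq, Prod.mk.injEq, not_and_or] using hab
  have hadd : 0 < a + b := by
    rcases hne with h | h
    · exact add_pos_of_pos_of_nonneg (ha.lt_of_ne' h) hb
    · exact add_pos_of_nonneg_of_pos ha (hb.lt_of_ne' h)
  have hpos : 0 < realOmegaIL n a b :=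
    add_pos_of_pos_of_nonneg hn₁ (rationalizedRoot_nonneg hadd.le ha)
  have hsol : a * n / realOmegaIL n a b - b * realOmegaIL n a b / (n - 1) = a - b :=
    (div_sub_div_eq_sub_iff_quadratic hn₁.ne' hpos.ne').2
      (rationalizedRoot_isRoot hadd (by positivity))
  have hanti : StrictAntiOn (fun x ↦ a * n / x - b / (n - 1) * x) (Set.Ioi 0) :=
    strictAntiOn_div_sub_mul (by positivity) (by positivity)
      (hne.imp (mul_ne_zero · hn₀) (div_ne_zero · hn₁.ne'))
  refine ⟨hpos, hsol, fun Ω hΩ h ↦ hanti.injOn hΩ hpos ?_⟩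
  simpa only [mul_div_right_comm b] using h.trans hsol.symm

theorem stmt3 (ν : ℕ) (hν : 2 ≤ ν) (a b : ℝ) (ha : 0 ≤ a) (hb : 0 ≤ b)
    (hab : (a, b) ≠ (0, 0)) :
    0 < OmegaIL ν a b ∧
      a * (ν : ℝ) / OmegaIL ν a b - b * OmegaIL ν a b / ((ν : ℝ) - 1) = a - b ∧
      ∀ Ω : ℝ, 0 < Ω → a * (ν : ℝ) / Ω - b * Ω / ((ν : ℝ) - 1) = a - b →
        Ω = OmegaIL ν a b := by
  have hν₁ : 1 < (ν : ℝ) := Nat.one_lt_cast.2 hν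
  simpa only [OmegaIL_eq_realOmegaIL hν₁ ha hb] using stmt3_general ν hν₁ a b ha hb hab
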